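/- Let n ≥ 1 be an integer. There exists a constant C > 0 depending only on n such that for all x, y ∈ ℝⁿ, every α ∈ (0,1), every r > 0 and every t > 0: ∫_{ℝⁿ \ B((1−α)x + αy, r)} k(αt, x, z) · k((1−α)t, z, y) dz ≤ C · k(t, x, y) · exp(−r²/(8α(1−α)t)). -/

import Mathlib

open MeasureTheory Real

/-- The global Gaussian heat kernel `k(t,x,y) = (4πt)^(−n/2) exp(−|x−y|²/(4t))` on ℝⁿ. -/
noncomputable def heatKernel (n : ℕ) (t : ℝ) (x y : EuclideanSpace ℝ (Fin n)) : ℝ :=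
  (4 * π * t) ^ (-(n : ℝ) / 2) * Real.exp (-‖x - y‖ ^ 2 / (4 * t))

/-!
With `w = (1 - α)x + αy` and `s = α(1 - α)t`, completing the square in `z` gives
`k(αt, x, z) k((1 - α)t, z, y) = k(t, x, y) k(s, z, w)`, the factorization behind the Brownian
bridge, so only the Gaussian tail `∫_{|z - w| ≥ r} k(s, z, w) dz` has to be bounded. Splitting off a
fraction `θ` of the exponent gains a factor `exp(-θr²/(4s))` on the tail and leaves
`(1 - θ)^(-n/2)` times a heat kernel at the later time `s/(1 - θ)`, whose total mass is one.
The rate `1/8` is the case `θ = 1/2`.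
-/

theorem one_sub_mul_norm_sub_sq_add_mul_norm_sub_sq {V : Type*} [NormedAddCommGroup V]
    [InnerProductSpace ℝ V] (x y z : V) (a : ℝ) :
    (1 - a) * ‖x - z‖ ^ 2 + a * ‖z - y‖ ^ 2 =
      a * (1 - a) * ‖x - y‖ ^ 2 + ‖z - ((1 - a) • x + a • y)‖ ^ 2 := by
  have hxy : x - y = (x - z) + (z - y) := by abel
  have hz : z - ((1 - a) • x + a • y) = a • (z - y) - (1 - a) • (x - z) := by module
  rw [hxy, hz]
  generalize x - z = u, z - y = v
  rw [norm_add_sq_real, norm_sub_sq_real, norm_smul, norm_smul, real_inner_smul_left,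
    real_inner_smul_right, real_inner_comm, mul_pow, mul_pow]
  simp only [norm_eq_abs, sq_abs]
  ring

section

variable {n : ℕ} {s t α θ r : ℝ}

theorem heatKernel_nonneg (ht : 0 ≤ t) (x y : EuclideanSpace ℝ (Fin n)) :
    0 ≤ heatKernel n t x y := by
  unfold heatKernel
  positivity

theorem integral_heatKernel (ht : 0 < t) (y : EuclideanSpace ℝ (Fin n)) :
    ∫ x, heatKernel n t x y = 1 := by
  have hgauss : ∫ x : EuclideanSpace ℝ (Fin n), exp (-‖x‖ ^ 2 / (4 * t)) =
      (4 * π * t) ^ ((n : ℝ) / 2) := by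
    have hb : 0 < (4 * t)⁻¹ := by positivity
    have hexp (x : EuclideanSpace ℝ (Fin n)) :
        -‖x‖ ^ 2 / (4 * t) = -(4 * t)⁻¹ * ‖x‖ ^ 2 := by ring
    have hbase : π / (4 * t)⁻¹ = 4 * π * t := by field_simp
    simp only [hexp]
    rw [GaussianFourier.integral_rexp_neg_mul_sq_norm hb, finrank_euclideanSpace_fin, hbase]
  simp only [heatKernel]
  rw [integral_const_mul, integral_sub_right_eq_self (fun x ↦ exp (-‖x‖ ^ 2 / (4 * t))), hgauss,
    ← rpow_add (by positivity), neg_div, neg_add_cancel, rpow_zero]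

theorem integrable_heatKernel (ht : 0 < t) (y : EuclideanSpace ℝ (Fin n)) :
    Integrable (heatKernel n t · y) :=
  .of_integral_ne_zero <| (integral_heatKernel ht y).trans_ne one_ne_zero

theorem heatKernel_mul_heatKernel (hα : α ∈ Set.Ioo 0 1) (ht : 0 < t)
    (x y z : EuclideanSpace ℝ (Fin n)) :
    heatKernel n (α * t) x z * heatKernel n ((1 - α) * t) z y =
      heatKernel n t x y * heatKernel n (α * (1 - α) * t) z ((1 - α) • x + α • y) := by
  obtain ⟨hα₀, hα₁⟩ := hα
  have : 0 < 1 - α := sub_pos.mpr hα₁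
  unfold heatKernel
  rw [mul_mul_mul_comm, mul_mul_mul_comm (_ ^ _) (exp _), ← exp_add, ← exp_add,
    ← mul_rpow (by positivity) (by positivity), ← mul_rpow (by positivity) (by positivity)]
  congr 2
  · ring
  · field_simp
    linear_combination -one_sub_mul_norm_sub_sq_add_mul_norm_sub_sq x y z α

theorem heatKernel_eq_mul_heatKernel_div (hs : 0 ≤ s) (hθ : θ < 1)
    (z w : EuclideanSpace ℝ (Fin n)) :
    heatKernel n s z w = (1 - θ) ^ (-(n : ℝ) / 2) * exp (-(θ * ‖z - w‖ ^ 2) / (4 * s)) *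
      heatKernel n (s / (1 - θ)) z w := by
  have hθ' : 0 < 1 - θ := sub_pos.mpr hθ
  unfold heatKernel
  rw [mul_mul_mul_comm, ← exp_add, ← mul_rpow (by positivity) (by positivity)]
  congr 2
  · field_simp
  · field_simp
    ring

theorem heatKernel_le_mul_heatKernel_div (hs : 0 ≤ s) (hθ : θ ∈ Set.Ico 0 1) (hr : 0 ≤ r)
    {z w : EuclideanSpace ℝ (Fin n)} (hzw : r ≤ ‖z - w‖) :
    heatKernel n s z w ≤ (1 - θ) ^ (-(n : ℝ) / 2) * exp (-(θ * r ^ 2) / (4 * s)) *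
      heatKernel n (s / (1 - θ)) z w := by
  obtain ⟨hθ₀, hθ₁⟩ := hθ
  have hθ' : 0 < 1 - θ := sub_pos.mpr hθ₁
  have hk : 0 ≤ heatKernel n (s / (1 - θ)) z w := heatKernel_nonneg (div_nonneg hs hθ'.le) z w
  rw [heatKernel_eq_mul_heatKernel_div hs hθ₁]
  gcongr

theorem setIntegral_compl_ball_heatKernel_le (hs : 0 < s) (hθ : θ ∈ Set.Ico 0 1) (hr : 0 ≤ r)
    (w : EuclideanSpace ℝ (Fin n)) :
    ∫ z in (Metric.ball w r)ᶜ, heatKernel n s z w ≤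
      (1 - θ) ^ (-(n : ℝ) / 2) * exp (-(θ * r ^ 2) / (4 * s)) := by
  have hθ' : 0 < 1 - θ := sub_pos.mpr hθ.2
  have hs' : 0 < s / (1 - θ) := div_pos hs hθ'
  set A := (1 - θ) ^ (-(n : ℝ) / 2) * exp (-(θ * r ^ 2) / (4 * s))
  have hint : Integrable fun z ↦ A * heatKernel n (s / (1 - θ)) z w :=
    (integrable_heatKernel hs' w).const_mul A
  calc ∫ z in (Metric.ball w r)ᶜ, heatKernel n s z w
      ≤ ∫ z in (Metric.ball w r)ᶜ, A * heatKernel n (s / (1 - θ)) z w := by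
        refine setIntegral_mono_on (integrable_heatKernel hs w).integrableOn hint.integrableOn
          measurableSet_ball.compl fun z hz ↦ heatKernel_le_mul_heatKernel_div hs.le hθ hr ?_
        simpa only [Set.mem_compl_iff, mem_ball_iff_norm, not_lt] using hz
    _ ≤ ∫ z, A * heatKernel n (s / (1 - θ)) z w :=
        setIntegral_le_integral hint <| .of_forall fun z ↦
          mul_nonneg (by positivity) (heatKernel_nonneg hs'.le z w)
    _ = A := by rw [integral_const_mul, integral_heatKernel hs', mul_one]

theorem stmt2_general (hα : α ∈ Set.Ioo 0 1) (hθ : θ ∈ Set.Ico 0 1) (hr : 0 ≤ r) (ht : 0 < t)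
    (x y : EuclideanSpace ℝ (Fin n)) :
    ∫ z in (Metric.ball ((1 - α) • x + α • y) r)ᶜ,
        heatKernel n (α * t) x z * heatKernel n ((1 - α) * t) z y ≤
      (1 - θ) ^ (-(n : ℝ) / 2) * heatKernel n t x y *
        exp (-(θ * r ^ 2) / (4 * (α * (1 - α) * t))) := by
  have hs : 0 < α * (1 - α) * t := mul_pos (mul_pos hα.1 (sub_pos.mpr hα.2)) ht
  simp only [heatKernel_mul_heatKernel hα ht, integral_const_mul]
  rw [mul_comm (_ ^ _), mul_assoc (heatKernel n t x y)]
  exact mul_le_mul_of_nonneg_left (setIntegral_compl_ball_heatKernel_le hs hθ hr _)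
    (heatKernel_nonneg ht.le x y)

end

/-- There is a constant `C > 0` depending only on `n` such that for all `x, y ∈ ℝⁿ`,
`α ∈ (0,1)`, `r > 0` and `t > 0`:
`∫_{ℝⁿ \ B((1−α)x+αy, r)} k(αt,x,z) k((1−α)t,z,y) dz ≤ C k(t,x,y) exp(−r²/(8α(1−α)t))`. -/
theorem stmt2 (n : ℕ) (hn : 1 ≤ n) :
    ∃ C : ℝ, 0 < C ∧
      ∀ x y : EuclideanSpace ℝ (Fin n),
      ∀ α : ℝ, α ∈ Set.Ioo (0 : ℝ) 1 →
      ∀ r t : ℝ, 0 < r → 0 < t →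
      (∫ z in (Metric.ball ((1 - α) • x + α • y) r)ᶜ,
        heatKernel n (α * t) x z * heatKernel n ((1 - α) * t) z y)
      ≤ C * heatKernel n t x y * Real.exp (-r ^ 2 / (8 * α * (1 - α) * t)) := by
  refine ⟨(1 - 1 / 2) ^ (-(n : ℝ) / 2), by positivity, fun x y α hα r t hr ht ↦ ?_⟩
  convert! stmt2_general hα (by norm_num : (1 / 2 : ℝ) ∈ Set.Ico 0 1) hr.le ht x y using 3
  field
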